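/- For k = 1, …, M, let Q^(k) be the optimal Q-function for reward r^(k), and let α₁, …, α_M ≥ 0 be nonnegative weights. If Q̃ is the optimal Q-function for the conically combined reward (s,a) ↦ ∑_{k=1}^M α_k·r^(k)(s,a), then for all (s,a): Q̃(s,a) ≤ ∑_{k=1}^M α_k·Q^(k)(s,a). -/

import Mathlib

/-!
The Bellman operator `T_r Q = r + γ P (max Q)` is monotone, and it raises by at most `γ c` when `Q`
is raised by a constant `c ≥ 0`. Comparing a subsolution `Q ≤ T_r Q` with a supersolution
`T_r V ≤ V` at a point where `Q - V` is largest, a positive gap `d` would satisfy `d ≤ γ d`; hence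
`Q ≤ V`. Moreover `(r, Q) ↦ T_r Q` is sublinear because the maximum is, so a conical combination
of supersolutions is a supersolution for the combined reward.
-/

open Finset

/-- Maximum of a real-valued function over a nonempty finite action set. -/
noncomputable def amax {A : Type*} [Fintype A] [Nonempty A] (g : A → ℝ) : ℝ :=
  Finset.univ.sup' Finset.univ_nonempty g

section Amax

variable {A : Type*} [Fintype A] [Nonempty A]

theorem le_amax (g : A → ℝ) (a : A) : g a ≤ amax g :=
  le_sup' g (mem_univ a)

theorem amax_le {g : A → ℝ} {c : ℝ} (h : ∀ a, g a ≤ c) : amax g ≤ c :=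
  sup'_le _ _ fun a _ => h a

theorem amax_mono {f g : A → ℝ} (h : f ≤ g) : amax f ≤ amax g :=
  amax_le fun a => (h a).trans (le_amax g a)

theorem amax_add_const_le (g : A → ℝ) (c : ℝ) : amax (fun a => g a + c) ≤ amax g + c :=
  amax_le fun a => add_le_add_left (le_amax g a) c

theorem amax_sum_mul_le {ι : Type*} [Fintype ι] {α : ι → ℝ} (hα : ∀ k, 0 ≤ α k)
    (g : ι → A → ℝ) : amax (fun a => ∑ k, α k * g k a) ≤ ∑ k, α k * amax (g k) :=
  amax_le fun a => sum_le_sum fun k _ => mul_le_mul_of_nonneg_left (le_amax (g k) a) (hα k)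

end Amax

section Bellman

variable {S A : Type*} [Fintype S] [Fintype A] [Nonempty A]

/-- The Bellman optimality operator for the reward `r`, acting on Q-functions. The optimal
Q-function for `r` is its fixed point, and `p s a` is the vector of transition weights from `s`
under `a`. -/
noncomputable def bellman (p : S → A → S → ℝ) (γ : ℝ) (r Q : S → A → ℝ) : S → A → ℝ :=
  fun s a => r s a + γ * ∑ s', p s a s' * amax (Q s')

variable {p : S → A → S → ℝ} {γ : ℝ}

theorem bellman_mono (hp : ∀ s a s', 0 ≤ p s a s') (hγ : 0 ≤ γ) (r : S → A → ℝ)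
    {Q V : S → A → ℝ} (h : Q ≤ V) : bellman p γ r Q ≤ bellman p γ r V := by
  intro s a
  unfold bellman
  gcongr with s'
  · exact hp s a s'
  · exact amax_mono (h s')

theorem bellman_add_const_le (hp : ∀ s a s', 0 ≤ p s a s') (hp_sum : ∀ s a, ∑ s', p s a s' ≤ 1)
    (hγ : 0 ≤ γ) (r Q : S → A → ℝ) {c : ℝ} (hc : 0 ≤ c) (s : S) (a : A) :
    bellman p γ r (fun s a => Q s a + c) s a ≤ bellman p γ r Q s a + γ * c := by
  have hexpect : ∑ s', p s a s' * amax (fun a' => Q s' a' + c)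
      ≤ ∑ s', p s a s' * amax (Q s') + c := calc
    _ ≤ ∑ s', p s a s' * (amax (Q s') + c) :=
      sum_le_sum fun s' _ => mul_le_mul_of_nonneg_left (amax_add_const_le (Q s') c) (hp s a s')
    _ = ∑ s', p s a s' * amax (Q s') + (∑ s', p s a s') * c := by
      simp only [mul_add, sum_add_distrib, sum_mul]
    _ ≤ ∑ s', p s a s' * amax (Q s') + c := by
      gcongr
      exact mul_le_of_le_one_left hc (hp_sum s a)
  calc r s a + γ * ∑ s', p s a s' * amax (fun a' => Q s' a' + c)
    _ ≤ r s a + γ * (∑ s', p s a s' * amax (Q s') + c) := by gcongr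
    _ = bellman p γ r Q s a + γ * c := by rw [bellman]; ring

theorem bellman_sum_mul_le (hp : ∀ s a s', 0 ≤ p s a s') (hγ : 0 ≤ γ) {ι : Type*} [Fintype ι]
    {α : ι → ℝ} (hα : ∀ k, 0 ≤ α k) (r Q : ι → S → A → ℝ) (s : S) (a : A) :
    bellman p γ (fun s a => ∑ k, α k * r k s a) (fun s a => ∑ k, α k * Q k s a) s a
      ≤ ∑ k, α k * bellman p γ (r k) (Q k) s a := calc
  _ ≤ ∑ k, α k * r k s a + γ * ∑ s', p s a s' * ∑ k, α k * amax (Q k s') := by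
    unfold bellman
    gcongr with s'
    · exact hp s a s'
    · exact amax_sum_mul_le hα fun k => Q k s'
  _ = ∑ k, α k * r k s a + ∑ k, α k * (γ * ∑ s', p s a s' * amax (Q k s')) := by
    simp only [mul_sum]
    rw [sum_comm]
    simp only [mul_left_comm]
  _ = ∑ k, α k * bellman p γ (r k) (Q k) s a := by
    simp only [bellman, mul_add, sum_add_distrib]

theorem le_of_le_bellman_of_bellman_le (hp : ∀ s a s', 0 ≤ p s a s')
    (hp_sum : ∀ s a, ∑ s', p s a s' ≤ 1) (hγ0 : 0 ≤ γ) (hγ1 : γ < 1) {r Q V : S → A → ℝ}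
    (hQ : Q ≤ bellman p γ r Q) (hV : bellman p γ r V ≤ V) : Q ≤ V := by
  intro s a
  have : Nonempty S := ⟨s⟩
  obtain ⟨⟨s₀, a₀⟩, hmax⟩ := Finite.exists_max fun x : S × A => Q x.1 x.2 - V x.1 x.2
  let d := Q s₀ a₀ - V s₀ a₀
  have hgap : Q ≤ fun s a => V s a + d := fun s a => sub_le_iff_le_add'.mp (hmax (s, a))
  suffices hd : d ≤ 0 from (hgap s a).trans (add_le_of_nonpos_right hd)
  by_contra! hd
  have hcontract : Q s₀ a₀ ≤ V s₀ a₀ + γ * d := calc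
    Q s₀ a₀ ≤ bellman p γ r Q s₀ a₀ := hQ s₀ a₀
    _ ≤ bellman p γ r (fun s a => V s a + d) s₀ a₀ := bellman_mono hp hγ0 r hgap s₀ a₀
    _ ≤ bellman p γ r V s₀ a₀ + γ * d := bellman_add_const_le hp hp_sum hγ0 r V hd.le s₀ a₀
    _ ≤ V s₀ a₀ + γ * d := add_le_add_left (hV s₀ a₀) _
  exact (mul_lt_of_lt_one_left hd hγ1).not_ge (sub_le_iff_le_add'.mpr hcontract)

theorem conical_combination_standard_rl_general (hp : ∀ s a s', 0 ≤ p s a s')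
    (hp_sum : ∀ s a, ∑ s', p s a s' ≤ 1) (hγ0 : 0 ≤ γ) (hγ1 : γ < 1) {ι : Type*} [Fintype ι]
    {r Q : ι → S → A → ℝ} (hQ : ∀ k, bellman p γ (r k) (Q k) ≤ Q k)
    {α : ι → ℝ} (hα : ∀ k, 0 ≤ α k) {Qt : S → A → ℝ}
    (hQt : Qt ≤ bellman p γ (fun s a => ∑ k, α k * r k s a) Qt) :
    Qt ≤ fun s a => ∑ k, α k * Q k s a := by
  refine le_of_le_bellman_of_bellman_le hp hp_sum hγ0 hγ1 hQt fun s a => ?_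
  calc
    _ ≤ ∑ k, α k * bellman p γ (r k) (Q k) s a := bellman_sum_mul_le hp hγ0 hα r Q s a
    _ ≤ ∑ k, α k * Q k s a :=
      sum_le_sum fun k _ => mul_le_mul_of_nonneg_left (hQ k s a) (hα k)

end Bellman

/-- **Conical combination of rewards, standard RL.** -/
theorem conical_combination_standard_rl
    {S A : Type*} [Fintype S] [Fintype A] [Nonempty S] [Nonempty A]
    (p : S → A → S → ℝ)
    (hp_nonneg : ∀ s a s', 0 ≤ p s a s')
    (hp_sum : ∀ s a, ∑ s', p s a s' = 1)
    (γ : ℝ) (hγ0 : 0 < γ) (hγ1 : γ < 1)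
    (M : ℕ)
    (r : Fin M → S → A → ℝ)
    -- Q k is the optimal Q-function for reward r k
    (Q : Fin M → S → A → ℝ)
    (hQ : ∀ k s a, Q k s a = r k s a + γ * ∑ s', p s a s' * amax (fun a' => Q k s' a'))
    -- nonnegative weights
    (α : Fin M → ℝ)
    (hα : ∀ k, 0 ≤ α k)
    -- Q̃ is the optimal Q-function for the conically combined reward
    (Qt : S → A → ℝ)
    (hQt : ∀ s a, Qt s a = (∑ k, α k * r k s a)
      + γ * ∑ s', p s a s' * amax (fun a' => Qt s' a')) :
    ∀ s a, Qt s a ≤ ∑ k, α k * Q k s a := by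
  exact conical_combination_standard_rl_general hp_nonneg (fun s a => (hp_sum s a).le) hγ0.le hγ1
    (fun k s a => (hQ k s a).ge) hα fun s a => (hQt s a).le
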